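/- Assume E₀, U, L, K satisfy the hypothesis. Let (u,w) ∈ E₀ × H be such that K^⋄Ku − L^⋄w ∈ E, i.e. there exists e ∈ E with ⟨e,x⟩_E = ⟨Ku,Kx⟩_U − ⟨w,Lx⟩_H for all x ∈ E₀. Then w ∈ D(D) and Dw = e. -/

import Mathlib

open scoped ComplexInnerProductSpace
open Filter Topology Classical

noncomputable section

variable {E H : Type*}
  [NormedAddCommGroup E] [InnerProductSpace ℂ E] [CompleteSpace E]
  [NormedAddCommGroup H] [InnerProductSpace ℂ H] [CompleteSpace H]

/-- The operator `G := (−D₀)*`. -/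
def Gop (D₀ : H →ₗ.[ℂ] E) : E →ₗ.[ℂ] H := (-D₀).adjoint

/-- The operator `D := −(G₀)*`. -/
def Dop (G₀ : E →ₗ.[ℂ] H) : H →ₗ.[ℂ] E := -(G₀.adjoint)

/-- Pointwise application of `G`, defined to be `0` off the domain. -/
def Gap (D₀ : H →ₗ.[ℂ] E) (u : E) : H :=
  if h : u ∈ (Gop D₀).domain then Gop D₀ ⟨u, h⟩ else 0

/-- Pointwise application of `D`, defined to be `0` off the domain. -/
def Dap (G₀ : E →ₗ.[ℂ] H) (w : H) : E :=
  if h : w ∈ (Dop G₀).domain then Dop G₀ ⟨w, h⟩ else 0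

/-- The graph inner product of `D_G`: `⟪x,y⟫_E + ⟪Gx,Gy⟫_H`. -/
def innG (D₀ : H →ₗ.[ℂ] E) (x y : E) : ℂ := ⟪x, y⟫ + ⟪Gap D₀ x, Gap D₀ y⟫

/-- The graph inner product of `D_D`: `⟪x,y⟫_H + ⟪Dx,Dy⟫_E`. -/
def innD (G₀ : E →ₗ.[ℂ] H) (x y : H) : ℂ := ⟪x, y⟫ + ⟪Dap G₀ x, Dap G₀ y⟫

/-- The boundary data space `BD(G)`, the orthogonal complement of `D(G₀)` in `D_G`. -/
def BDG (G₀ : E →ₗ.[ℂ] H) (D₀ : H →ₗ.[ℂ] E) : Set E :=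
  {u | u ∈ (Gop D₀).domain ∧ ∀ v ∈ G₀.domain, innG D₀ u v = 0}

/-- The boundary data space `BD(D)`, the orthogonal complement of `D(D₀)` in `D_D`. -/
def BDD (G₀ : E →ₗ.[ℂ] H) (D₀ : H →ₗ.[ℂ] E) : Set H :=
  {w | w ∈ (Dop G₀).domain ∧ ∀ v ∈ D₀.domain, innD G₀ w v = 0}

variable {U E₀ : Type*}
  [NormedAddCommGroup U] [InnerProductSpace ℂ U] [CompleteSpace U]
  [NormedAddCommGroup E₀] [InnerProductSpace ℂ E₀] [CompleteSpace E₀]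

/-- Closedness of the operator `(L,K) : E₀ ⊆ E → H ⊕ U`: whenever `wₙ` in `E₀` with `wₙ → w`
in `E`, `Lwₙ → v` in `H` and `Kwₙ → z` in `U`, then `w ∈ E₀`, `Lw = v` and `Kw = z`. -/
def ClosedLK (j : E₀ →L[ℂ] E) (L : E₀ →L[ℂ] H) (K : E₀ →L[ℂ] U) : Prop :=
  ∀ (f : ℕ → E₀) (w : E) (v : H) (z : U),
    Tendsto (fun n => j (f n)) atTop (nhds w) →
    Tendsto (fun n => L (f n)) atTop (nhds v) →
    Tendsto (fun n => K (f n)) atTop (nhds z) →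
    ∃ w₀ : E₀, j w₀ = w ∧ L w₀ = v ∧ K w₀ = z

section

variable {V W : Type*} [NormedAddCommGroup V] [NormedAddCommGroup W]

theorem mk_mem_graph_adjoint_iff {𝕜 : Type*} [RCLike 𝕜] [InnerProductSpace 𝕜 V]
    [InnerProductSpace 𝕜 W] [CompleteSpace V] {T : V →ₗ.[𝕜] W}
    (hT : Dense (T.domain : Set V)) {w : W} {v : V} :
    (w, v) ∈ T.adjoint.graph ↔ ∀ x : T.domain, inner 𝕜 v (x : V) = inner 𝕜 w (T x) := by
  constructor
  · intro hwv x
    obtain ⟨y, rfl, rfl⟩ := T.adjoint.mem_graph_iff.1 hwv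
    exact LinearPMap.adjoint_isFormalAdjoint hT y x
  · intro hinner
    have hw : w ∈ T.adjoint.domain := LinearPMap.mem_adjoint_domain_of_exists w ⟨v, hinner⟩
    exact T.adjoint.mem_graph_iff.2 ⟨⟨w, hw⟩, rfl, LinearPMap.adjoint_apply_eq hT _ hinner⟩

variable [InnerProductSpace ℂ V] [InnerProductSpace ℂ W]

theorem Gap_eq_of_le [CompleteSpace W] {G₀ : V →ₗ.[ℂ] W} {D₀ : W →ₗ.[ℂ] V}
    (hsub : G₀ ≤ Gop D₀) (x : G₀.domain) : Gap D₀ x = G₀ x :=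
  (dif_pos (hsub.1 x.2)).trans (hsub.2 rfl).symm

theorem mem_domain_Dop_and_Dap_eq_iff [CompleteSpace V] {G₀ : V →ₗ.[ℂ] W}
    (hG₀dense : Dense (G₀.domain : Set V)) {w : W} {e : V} :
    w ∈ (Dop G₀).domain ∧ Dap G₀ w = e ↔ ∀ x : G₀.domain, ⟪e, (x : V)⟫ = -⟪w, G₀ x⟫ := by
  have mem_graph_adjoint_iff :
      w ∈ (Dop G₀).domain ∧ Dap G₀ w = e ↔ (w, -e) ∈ G₀.adjoint.graph := by
    constructor
    · rintro ⟨hw, rfl⟩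
      rw [Dap, dif_pos hw]
      exact G₀.adjoint.mem_graph_iff.2 ⟨⟨w, hw⟩, rfl, (neg_neg _).symm⟩
    · intro hwe
      obtain ⟨⟨w, hw⟩, rfl, hadj⟩ := G₀.adjoint.mem_graph_iff.1 hwe
      exact ⟨hw, (dif_pos hw).trans (neg_eq_iff_eq_neg.2 hadj)⟩
  simp only [mem_graph_adjoint_iff, mk_mem_graph_adjoint_iff hG₀dense, inner_neg_left,
    neg_eq_iff_eq_neg]

theorem mem_domD_of_eq_general [CompleteSpace V] {X Y : Type*} [NormedAddCommGroup Y]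
    [InnerProductSpace ℂ Y] (G₀ : V →ₗ.[ℂ] W) (hG₀dense : Dense (G₀.domain : Set V))
    (j : X → V) (L : X → W) (K : X → Y)
    (hG₀subL : ∀ v : G₀.domain, ∃ x, j x = v ∧ L x = G₀ v)
    (hK0 : ∀ x, j x ∈ G₀.domain → K x = 0)
    (y : Y) (w : W) (e : V) (he : ∀ x, ⟪e, j x⟫ = ⟪y, K x⟫ - ⟪w, L x⟫) :
    w ∈ (Dop G₀).domain ∧ Dap G₀ w = e := by
  refine (mem_domain_Dop_and_Dap_eq_iff hG₀dense).2 fun v => ?_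
  obtain ⟨x, hjx, hLx⟩ := hG₀subL v
  have hKx : K x = 0 := hK0 x (hjx ▸ v.2)
  calc ⟪e, (v : V)⟫ = ⟪y, K x⟫ - ⟪w, L x⟫ := hjx ▸ he x
    _ = -⟪w, G₀ v⟫ := by rw [hKx, hLx, inner_zero_right, zero_sub]

end

/-- [Trostorff 2015, Lemma 3.2]: if `E₀, U, L, K` satisfy the hypothesis and
`(u,w) ∈ E₀ × H` is such that `K^⋄Ku − L^⋄w ∈ E`, i.e. there is `e ∈ E` with
`⟪e,x⟫_E = ⟪Ku,Kx⟫_U − ⟪w,Lx⟫_H` for all `x ∈ E₀`, then `w ∈ D(D)` and `Dw = e`. -/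
theorem mem_domD_of_eq (G₀ : E →ₗ.[ℂ] H) (D₀ : H →ₗ.[ℂ] E)
    (hG₀dense : Dense (G₀.domain : Set E)) (hD₀dense : Dense (D₀.domain : Set H))
    (hG₀closed : G₀.IsClosed) (hD₀closed : D₀.IsClosed)
    (hsub : G₀ ≤ Gop D₀)
    (j : E₀ →L[ℂ] E) (L : E₀ →L[ℂ] H) (K : E₀ →L[ℂ] U)
    -- hypothesis (a): `E₀ ⊆ E` dense and continuous
    (hj_inj : Function.Injective j) (hj_dense : DenseRange j)
    -- hypothesis (b): `(L,K)` is closed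
    (hclosed : ClosedLK j L K)
    -- hypothesis (c): `G₀ ⊆ L ⊆ G` and `K` vanishes on `D(G₀)`
    (hLsubG : ∀ x : E₀, j x ∈ (Gop D₀).domain ∧ L x = Gap D₀ (j x))
    (hG₀subL : ∀ u ∈ G₀.domain, ∃ x : E₀, j x = u)
    (hK0 : ∀ x : E₀, j x ∈ G₀.domain → K x = 0)
    (u : E₀) (w : H) (e : E)
    (he : ∀ x : E₀, (⟪e, j x⟫ : ℂ) = ⟪K u, K x⟫ - ⟪w, L x⟫) :
    w ∈ (Dop G₀).domain ∧ Dap G₀ w = e := by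
  refine mem_domD_of_eq_general G₀ hG₀dense j L K (fun v => ?_) hK0 (K u) w e he
  exact (hG₀subL v v.2).imp fun x hx => ⟨hx, by rw [(hLsubG x).2, hx, Gap_eq_of_le hsub]⟩
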